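/- Let n and n_h be unit vectors in ℝ^d, let P = I − n ⊗ n and P_h = I − n_h ⊗ n_h, let H be a symmetric linear map on ℝ^d, let ρ ∈ ℝ, and define B = P (I − ρ H) P_h. Then the operator norms satisfy ‖B‖ ≤ 1 + |ρ| ‖H‖ and ‖P − B B^T‖ ≤ ‖n − n_h‖² + 2 |ρ| ‖H‖ + ρ² ‖H‖². -/

import Mathlib

/-!
Expanding with `K = ρ H`, `Bᵀ = P_h (I - K) P`, `P² = P`, `P_h² = P_h` gives
`P - B Bᵀ = P (I - P_h) P + P (K P_h + P_h K) P - P K P_h K P`.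
Since `P n = 0`, the first term is the rank-one map `w ⊗ w` with `w = P n_h = P (n_h - n)`,
whose norm is `‖w‖² ≤ ‖n - n_h‖²`; this is where the quadratic order comes from. The
remaining terms are bounded by submultiplicativity, because `‖P‖ ≤ 1` and `‖P_h‖ ≤ 1`.
-/

open scoped RealInnerProductSpace

/-- The rank-one map `a ⊗ b : v ↦ ⟨b, v⟩ a`. -/
noncomputable def outerProd {d : ℕ} (a b : EuclideanSpace ℝ (Fin d)) :
    EuclideanSpace ℝ (Fin d) →L[ℝ] EuclideanSpace ℝ (Fin d) :=
  (innerSL ℝ b).smulRight a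

/-- The orthogonal projection `I - n ⊗ n` onto the orthogonal complement of `n`. -/
noncomputable def tangProj {d : ℕ} (n : EuclideanSpace ℝ (Fin d)) :
    EuclideanSpace ℝ (Fin d) →L[ℝ] EuclideanSpace ℝ (Fin d) :=
  ContinuousLinearMap.id ℝ _ - outerProd n n

/-- The map `B = P (I - ρ H) P_h` between the discrete and exact tangent spaces. -/
noncomputable def Bmap {d : ℕ} (n nh : EuclideanSpace ℝ (Fin d))
    (H : EuclideanSpace ℝ (Fin d) →L[ℝ] EuclideanSpace ℝ (Fin d)) (ρ : ℝ) :
    EuclideanSpace ℝ (Fin d) →L[ℝ] EuclideanSpace ℝ (Fin d) :=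
  tangProj n ∘L (ContinuousLinearMap.id ℝ _ - ρ • H) ∘L tangProj nh

lemma outerProd_apply {d : ℕ} (a b v : EuclideanSpace ℝ (Fin d)) :
    outerProd a b v = ⟪b, v⟫ • a := by
  simp [outerProd]

lemma tangProj_apply {d : ℕ} (n v : EuclideanSpace ℝ (Fin d)) :
    tangProj n v = v - ⟪n, v⟫ • n := by
  simp [tangProj, outerProd_apply]

lemma norm_outerProd_le {d : ℕ} (a b : EuclideanSpace ℝ (Fin d)) :
    ‖outerProd a b‖ ≤ ‖b‖ * ‖a‖ := by
  refine ContinuousLinearMap.opNorm_le_bound _ (by positivity) fun v => ?_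
  rw [outerProd_apply, norm_smul]
  calc ‖⟪b, v⟫‖ * ‖a‖ ≤ (‖b‖ * ‖v‖) * ‖a‖ := by
        gcongr
        exact norm_inner_le_norm b v
    _ = ‖b‖ * ‖a‖ * ‖v‖ := by ring

lemma norm_tangProj_le {d : ℕ} {n : EuclideanSpace ℝ (Fin d)} (hn : ‖n‖ = 1) :
    ‖tangProj n‖ ≤ 1 := by
  refine ContinuousLinearMap.opNorm_le_bound _ zero_le_one fun v => ?_
  rw [one_mul, tangProj_apply]
  refine le_of_sq_le_sq ?_ (norm_nonneg v)
  rw [norm_sub_sq_real, norm_smul, hn, inner_smul_right, real_inner_comm, mul_one,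
    Real.norm_eq_abs, sq_abs]
  nlinarith [sq_nonneg ⟪n, v⟫]

lemma tangProj_self {d : ℕ} {n : EuclideanSpace ℝ (Fin d)} (hn : ‖n‖ = 1) :
    tangProj n n = 0 := by
  simp [tangProj_apply, hn]

lemma inner_tangProj {d : ℕ} (n u v : EuclideanSpace ℝ (Fin d)) :
    ⟪tangProj n u, v⟫ = ⟪u, tangProj n v⟫ := by
  simp only [tangProj_apply, inner_sub_left, inner_sub_right, inner_smul_left,
    inner_smul_right, real_inner_comm, RCLike.conj_to_real]
  rw [real_inner_comm u n]
  ring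

lemma tangProj_mul_self {d : ℕ} {n : EuclideanSpace ℝ (Fin d)} (hn : ‖n‖ = 1) :
    tangProj n * tangProj n = tangProj n := by
  ext1 v
  rw [mul_apply_eq_comp]
  conv_lhs => rw [tangProj_apply n v]
  rw [map_sub, map_smul, tangProj_self hn, smul_zero, sub_zero]

lemma adjoint_Bmap {d : ℕ} (n nh : EuclideanSpace ℝ (Fin d))
    (H : EuclideanSpace ℝ (Fin d) →L[ℝ] EuclideanSpace ℝ (Fin d))
    (hH : ∀ u v : EuclideanSpace ℝ (Fin d), ⟪H u, v⟫ = ⟪u, H v⟫) (ρ : ℝ) :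
    ContinuousLinearMap.adjoint (Bmap n nh H ρ) =
      tangProj nh * (1 - ρ • H) * tangProj n := by
  symm
  rw [ContinuousLinearMap.eq_adjoint_iff]
  intro u v
  have hK : ∀ x y : EuclideanSpace ℝ (Fin d), ⟪x - ρ • H x, y⟫ = ⟪x, y - ρ • H y⟫ := by
    intro x y
    simp [inner_sub_left, inner_sub_right, inner_smul_left, inner_smul_right, hH]
  change ⟪tangProj nh (tangProj n u - ρ • H (tangProj n u)), v⟫ =
    ⟪u, tangProj n (tangProj nh v - ρ • H (tangProj nh v))⟫
  rw [inner_tangProj, hK, inner_tangProj]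

/-- The consistency error of the two projections is quadratic in `n - n_h`:
`P (I - P_h) P = w ⊗ w` with `w = P (n_h - n)`. -/
lemma norm_tangProj_mul_one_sub_mul_le {d : ℕ} {n : EuclideanSpace ℝ (Fin d)}
    (nh : EuclideanSpace ℝ (Fin d)) (hn : ‖n‖ = 1) :
    ‖tangProj n * (1 - tangProj nh) * tangProj n‖ ≤ ‖n - nh‖ ^ 2 := by
  have h : tangProj n * (1 - tangProj nh) * tangProj n =
      outerProd (tangProj n (nh - n)) (tangProj n (nh - n)) := by
    ext1 v
    rw [outerProd_apply, map_sub, tangProj_self hn, sub_zero, inner_tangProj]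
    simp only [mul_apply_eq_comp, sub_apply,
      one_apply_eq_self]
    rw [tangProj_apply nh, sub_sub_cancel, map_smul]
  have hw : ‖tangProj n (nh - n)‖ ≤ ‖n - nh‖ := by
    rw [norm_sub_rev n nh]
    simpa using (tangProj n).le_of_opNorm_le (norm_tangProj_le hn) (nh - n)
  rw [h]
  refine (norm_outerProd_le _ _).trans ?_
  rw [← sq]
  gcongr

/-- For unit vectors `n`, `n_h`, a symmetric `H` and `ρ ∈ ℝ`, the map
`B = P (I - ρ H) P_h` satisfies `‖B‖ ≤ 1 + |ρ|‖H‖` and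
`‖P - B Bᵀ‖ ≤ ‖n - n_h‖² + 2|ρ|‖H‖ + ρ²‖H‖²`. -/
theorem Bmap_bounds {d : ℕ} (n nh : EuclideanSpace ℝ (Fin d))
    (hn : ‖n‖ = 1) (hnh : ‖nh‖ = 1)
    (H : EuclideanSpace ℝ (Fin d) →L[ℝ] EuclideanSpace ℝ (Fin d))
    (hH : ∀ u v : EuclideanSpace ℝ (Fin d), ⟪H u, v⟫ = ⟪u, H v⟫) (ρ : ℝ) :
    ‖Bmap n nh H ρ‖ ≤ 1 + |ρ| * ‖H‖ ∧
    ‖tangProj n - Bmap n nh H ρ ∘L ContinuousLinearMap.adjoint (Bmap n nh H ρ)‖ ≤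
      ‖n - nh‖ ^ 2 + 2 * |ρ| * ‖H‖ + ρ ^ 2 * ‖H‖ ^ 2 := by
  have hP := norm_tangProj_le hn
  have hQ := norm_tangProj_le hnh
  set K := ρ • H with hKdef
  have hK : ‖K‖ = |ρ| * ‖H‖ := by rw [hKdef, norm_smul, Real.norm_eq_abs]
  have hB : Bmap n nh H ρ = tangProj n * (1 - K) * tangProj nh := rfl
  -- Conjugating by the contractions `P` does not increase the norm.
  have conj : ∀ T : EuclideanSpace ℝ (Fin d) →L[ℝ] EuclideanSpace ℝ (Fin d),
      ‖tangProj n * T * tangProj n‖ ≤ ‖T‖ := fun T =>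
    calc ‖tangProj n * T * tangProj n‖ ≤ ‖tangProj n‖ * ‖T‖ * ‖tangProj n‖ := norm_mul₃_le
      _ ≤ 1 * ‖T‖ * 1 := by gcongr
      _ = ‖T‖ := by ring
  constructor
  · rw [hB, ← hK]
    calc ‖tangProj n * (1 - K) * tangProj nh‖
        ≤ ‖tangProj n‖ * ‖1 - K‖ * ‖tangProj nh‖ := norm_mul₃_le
      _ ≤ 1 * ‖1 - K‖ * 1 := by gcongr
      _ = ‖1 - K‖ := by ring
      _ ≤ ‖(1 : EuclideanSpace ℝ (Fin d) →L[ℝ] EuclideanSpace ℝ (Fin d))‖ + ‖K‖ :=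
        norm_sub_le _ _
      _ ≤ 1 + ‖K‖ := by
        gcongr
        exact ContinuousLinearMap.norm_id_le
  · rw [adjoint_Bmap n nh H hH ρ, hB, ← hKdef]
    change ‖tangProj n -
      tangProj n * (1 - K) * tangProj nh * (tangProj nh * (1 - K) * tangProj n)‖ ≤ _
    have hPP := tangProj_mul_self hn
    have hQQ := tangProj_mul_self hnh
    have hR := norm_tangProj_mul_one_sub_mul_le nh hn
    generalize tangProj n = P at *
    generalize tangProj nh = Q at *
    have expand : P - P * (1 - K) * Q * (Q * (1 - K) * P) =
        P * (1 - Q) * P + P * (K * Q + Q * K) * P - P * (K * Q * K) * P := by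
      calc P - P * (1 - K) * Q * (Q * (1 - K) * P)
          = P - P * (1 - K) * (Q * Q) * (1 - K) * P := by noncomm_ring
        _ = P * P - P * (1 - K) * Q * (1 - K) * P := by rw [hQQ, hPP]
        _ = _ := by
          simp only [mul_sub, sub_mul, mul_add, add_mul, mul_one, one_mul, mul_assoc]
          abel
    have h1 : ‖K * Q + Q * K‖ ≤ 2 * ‖K‖ :=
      calc ‖K * Q + Q * K‖ ≤ ‖K‖ * ‖Q‖ + ‖Q‖ * ‖K‖ :=
            (norm_add_le _ _).trans (add_le_add (norm_mul_le _ _) (norm_mul_le _ _))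
        _ ≤ ‖K‖ * 1 + 1 * ‖K‖ := by gcongr
        _ = 2 * ‖K‖ := by ring
    have h2 : ‖K * Q * K‖ ≤ ‖K‖ ^ 2 :=
      calc ‖K * Q * K‖ ≤ ‖K‖ * ‖Q‖ * ‖K‖ := norm_mul₃_le
        _ ≤ ‖K‖ * 1 * ‖K‖ := by gcongr
        _ = ‖K‖ ^ 2 := by ring
    rw [expand]
    calc _ ≤ ‖P * (1 - Q) * P‖ + ‖P * (K * Q + Q * K) * P‖ + ‖P * (K * Q * K) * P‖ :=
          (norm_sub_le _ _).trans (by gcongr; exact norm_add_le _ _)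
      _ ≤ ‖n - nh‖ ^ 2 + 2 * ‖K‖ + ‖K‖ ^ 2 :=
          add_le_add (add_le_add hR ((conj _).trans h1)) ((conj _).trans h2)
      _ = _ := by rw [hK, mul_pow, sq_abs]; ring
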